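/- Let d^{1-2} be the GBSM between finite MDPs M₁ and M₂, i.e., the pointwise supremum of the iterates d_0 = 0, d_n = F(d_{n−1}) of the GBSM operator F. If V₁* : S₁ → ℝ and V₂* : S₂ → ℝ satisfy the Bellman optimality equations V_i*(s) = max_{a∈A_i} { R_i(s,a) + γ·Σ_{s̃} P_i(s̃|s,a)·V_i*(s̃) } in M₁ and M₂ respectively, then |V₁*(s) − V₂*(s')| ≤ d^{1-2}(s,s') for every (s,s') ∈ S₁ × S₂. -/

import Mathlib

open scoped BigOperators

noncomputable section

/-- The (finite, linear-programming) 1-Wasserstein distance between probability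
vectors `P` on `S₁` and `Q` on `S₂` with cost function `d`. -/
def W1 {S₁ S₂ : Type*} [Fintype S₁] [Fintype S₂]
    (P : S₁ → ℝ) (Q : S₂ → ℝ) (d : S₁ → S₂ → ℝ) : ℝ :=
  sInf { c : ℝ | ∃ lam : S₁ → S₂ → ℝ,
    (∀ i j, 0 ≤ lam i j) ∧ (∀ i, ∑ j, lam i j = P i) ∧
    (∀ j, ∑ i, lam i j = Q j) ∧ c = ∑ i, ∑ j, lam i j * d i j }

/-- A finite Markov decision process (without its discount factor). -/
structure FinMDP (S A : Type*) [Fintype S] [Fintype A] where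
  P : S → A → S → ℝ
  R : S → A → ℝ
  P_nonneg : ∀ s a s', 0 ≤ P s a s'
  P_sum : ∀ s a, ∑ s', P s a s' = 1

variable {S₁ A₁ S₂ A₂ : Type*} [Fintype S₁] [Fintype A₁] [Fintype S₂] [Fintype A₂]

/-- `δ(d)((s,a),(s',a')) = |R₁(s,a) − R₂(s',a')| + γ·W₁(P₁(·|s,a), P₂(·|s',a'); d)` -/
def gbsmDelta (M₁ : FinMDP S₁ A₁) (M₂ : FinMDP S₂ A₂) (γ : ℝ)
    (d : S₁ → S₂ → ℝ) (s : S₁) (a : A₁) (s' : S₂) (a' : A₂) : ℝ :=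
  |M₁.R s a - M₂.R s' a'| + γ * W1 (M₁.P s a) (M₂.P s' a') d

/-- The GBSM operator `F(d)(s,s') = H(X_s, X_{s'}; δ(d))` where `H` is the Hausdorff
metric between the finite sets `X_s = {(s,a)}`, `X_{s'} = {(s',a')}`. -/
def gbsmF (M₁ : FinMDP S₁ A₁) (M₂ : FinMDP S₂ A₂) (γ : ℝ)
    (d : S₁ → S₂ → ℝ) : S₁ → S₂ → ℝ :=
  fun s s' =>
    max (⨆ a : A₁, ⨅ a' : A₂, gbsmDelta M₁ M₂ γ d s a s' a')
        (⨅ a : A₁, ⨆ a' : A₂, gbsmDelta M₁ M₂ γ d s a s' a')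

/-- The GBSM: pointwise supremum of the iterates of `gbsmF` from the zero function. -/
def gbsm (M₁ : FinMDP S₁ A₁) (M₂ : FinMDP S₂ A₂) (γ : ℝ) : S₁ → S₂ → ℝ :=
  fun s s' => ⨆ n : ℕ, (gbsmF M₁ M₂ γ)^[n] (fun _ _ => 0) s s'

/-!
If `|V₁ - V₂| ≤ d` pointwise, then one Bellman backup in each MDP improves this to
`|V₁ - V₂| ≤ F d`: integrating against any coupling of the transition probabilities shows that the
action values differ by at most `δ(d)`, and maximizing over actions costs at most the Hausdorff
expression. Since `F (d + K) = F d + γ K`, starting from the trivial bound `|V₁ - V₂| ≤ 0 + K` gives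
`|V₁ - V₂| ≤ Fⁿ 0 + γⁿ K` for every `n`, and `γⁿ K → 0`.
-/

section Coupling

/-- A coupling of the weight vectors `P` and `Q`: a transport plan as in the definition of `W1`. -/
structure IsCoupling (P : S₁ → ℝ) (Q : S₂ → ℝ) (lam : S₁ → S₂ → ℝ) : Prop where
  nonneg : ∀ i j, 0 ≤ lam i j
  sum_right : ∀ i, ∑ j, lam i j = P i
  sum_left : ∀ j, ∑ i, lam i j = Q j

/-- The cost `∑ i, ∑ j, λ(i,j) d(i,j)` of the transport plan `lam`, whose infimum over couplings
is `W1`. -/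
def transportCost (lam d : S₁ → S₂ → ℝ) : ℝ :=
  ∑ i, ∑ j, lam i j * d i j

variable {P : S₁ → ℝ} {Q : S₂ → ℝ} {lam d : S₁ → S₂ → ℝ}

theorem isCoupling_mul (hP : P ∈ stdSimplex ℝ S₁) (hQ : Q ∈ stdSimplex ℝ S₂) :
    IsCoupling P Q fun i j => P i * Q j where
  nonneg i j := mul_nonneg (hP.1 i) (hQ.1 j)
  sum_right i := by rw [← Finset.mul_sum, hQ.2, mul_one]
  sum_left j := by rw [← Finset.sum_mul, hP.2, one_mul]

theorem transportCost_mono {d' : S₁ → S₂ → ℝ} (hlam : ∀ i j, 0 ≤ lam i j)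
    (h : ∀ i j, d i j ≤ d' i j) : transportCost lam d ≤ transportCost lam d' :=
  Finset.sum_le_sum fun i _ => Finset.sum_le_sum fun j _ =>
    mul_le_mul_of_nonneg_left (h i j) (hlam i j)

theorem transportCost_add (lam d d' : S₁ → S₂ → ℝ) :
    transportCost lam (fun i j => d i j + d' i j) =
      transportCost lam d + transportCost lam d' := by
  simp only [transportCost, mul_add, Finset.sum_add_distrib]

namespace IsCoupling

theorem transportCost_sub (h : IsCoupling P Q lam) (f : S₁ → ℝ) (g : S₂ → ℝ) :
    transportCost lam (fun i j => f i - g j) = ∑ i, P i * f i - ∑ j, Q j * g j := by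
  have hf : ∑ i, ∑ j, lam i j * f i = ∑ i, P i * f i := by
    simp only [← Finset.sum_mul, h.sum_right]
  have hg : ∑ i, ∑ j, lam i j * g j = ∑ j, Q j * g j := by
    rw [Finset.sum_comm]
    simp only [← Finset.sum_mul, h.sum_left]
  simp only [transportCost, mul_sub, Finset.sum_sub_distrib, hf, hg]

theorem transportCost_const (h : IsCoupling P Q lam) (hP : ∑ i, P i = 1) (K : ℝ) :
    transportCost lam (fun _ _ => K) = K := by
  simp only [transportCost, ← Finset.sum_mul, h.sum_right, hP, one_mul]

end IsCoupling

end Coupling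

section Wasserstein

variable {P : S₁ → ℝ} {Q : S₂ → ℝ} {lam d : S₁ → S₂ → ℝ} {K : ℝ}

theorem W1_le_transportCost (hP : ∑ i, P i = 1) (h : IsCoupling P Q lam) :
    W1 P Q d ≤ transportCost lam d := by
  obtain ⟨m, hm⟩ := Finite.exists_ge fun p : S₁ × S₂ => d p.1 p.2
  refine csInf_le ⟨m, ?_⟩ ⟨lam, h.nonneg, h.sum_right, h.sum_left, rfl⟩
  rintro _ ⟨lam', hnonneg, hright, hleft, rfl⟩
  have h' : IsCoupling P Q lam' := ⟨hnonneg, hright, hleft⟩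
  exact (h'.transportCost_const hP m).ge.trans
    (transportCost_mono hnonneg fun i j => hm (i, j))

theorem le_W1 (hP : P ∈ stdSimplex ℝ S₁) (hQ : Q ∈ stdSimplex ℝ S₂)
    (h : ∀ lam, IsCoupling P Q lam → K ≤ transportCost lam d) : K ≤ W1 P Q d := by
  have hprod := isCoupling_mul hP hQ
  refine le_csInf ⟨_, _, hprod.nonneg, hprod.sum_right, hprod.sum_left, rfl⟩ ?_
  rintro _ ⟨lam, hnonneg, hright, hleft, rfl⟩
  exact h lam ⟨hnonneg, hright, hleft⟩

theorem W1_le_of_forall_le (hP : P ∈ stdSimplex ℝ S₁) (hQ : Q ∈ stdSimplex ℝ S₂)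
    (hd : ∀ i j, d i j ≤ K) : W1 P Q d ≤ K := by
  have hprod := isCoupling_mul hP hQ
  calc
    W1 P Q d ≤ transportCost (fun i j => P i * Q j) d := W1_le_transportCost hP.2 hprod
    _ ≤ transportCost (fun i j => P i * Q j) (fun _ _ => K) := transportCost_mono hprod.nonneg hd
    _ = K := hprod.transportCost_const hP.2 K

theorem W1_add_const (hP : P ∈ stdSimplex ℝ S₁) (hQ : Q ∈ stdSimplex ℝ S₂)
    (d : S₁ → S₂ → ℝ) (K : ℝ) : W1 P Q (fun i j => d i j + K) = W1 P Q d + K := by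
  have W1_add_const_le (e : S₁ → S₂ → ℝ) (c : ℝ) :
      W1 P Q (fun i j => e i j + c) ≤ W1 P Q e + c := by
    rw [← sub_le_iff_le_add]
    refine le_W1 hP hQ fun lam h => sub_le_iff_le_add.2 ?_
    calc
      W1 P Q (fun i j => e i j + c) ≤ transportCost lam fun i j => e i j + c :=
        W1_le_transportCost hP.2 h
      _ = transportCost lam e + c := by rw [transportCost_add, h.transportCost_const hP.2]
  refine le_antisymm (W1_add_const_le d K) ?_
  simpa [← le_sub_iff_add_le] using W1_add_const_le (fun i j => d i j + K) (-K)

theorem sub_le_W1 (hP : P ∈ stdSimplex ℝ S₁) (hQ : Q ∈ stdSimplex ℝ S₂)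
    {f : S₁ → ℝ} {g : S₂ → ℝ} (h : ∀ i j, f i - g j ≤ d i j) :
    ∑ i, P i * f i - ∑ j, Q j * g j ≤ W1 P Q d :=
  le_W1 hP hQ fun _ hlam =>
    (hlam.transportCost_sub f g).ge.trans (transportCost_mono hlam.nonneg h)

theorem abs_sub_le_W1 (hP : P ∈ stdSimplex ℝ S₁) (hQ : Q ∈ stdSimplex ℝ S₂)
    {f : S₁ → ℝ} {g : S₂ → ℝ} (h : ∀ i j, |f i - g j| ≤ d i j) :
    |∑ i, P i * f i - ∑ j, Q j * g j| ≤ W1 P Q d := by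
  refine abs_le'.2 ⟨sub_le_W1 hP hQ fun i j => (le_abs_self _).trans (h i j), ?_⟩
  have hneg : ∀ i j, -f i - -g j ≤ d i j := fun i j => by
    linarith [(neg_le_abs (f i - g j)).trans (h i j)]
  simpa [neg_add_eq_sub] using sub_le_W1 hP hQ hneg

end Wasserstein

section Hausdorff

/-- The Hausdorff-type expression `H(X, Y; c)` of the GBSM operator, for a cost `c` between two
finite nonempty types, over which the real-valued `⨆` and `⨅` are a maximum and a minimum. -/
def hausdorffCost {X Y : Type*} (c : X → Y → ℝ) : ℝ :=
  max (⨆ x, ⨅ y, c x y) (⨅ x, ⨆ y, c x y)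

variable {X Y : Type*} [Finite X] [Finite Y] [Nonempty X] [Nonempty Y]

theorem hausdorffCost_le {c : X → Y → ℝ} {K : ℝ} (h : ∀ x y, c x y ≤ K) :
    hausdorffCost c ≤ K := by
  obtain ⟨x₀⟩ := ‹Nonempty X›
  obtain ⟨y₀⟩ := ‹Nonempty Y›
  refine max_le (ciSup_le fun x => ?_) ?_
  · exact ciInf_le_of_le (Finite.bddBelow_range _) y₀ (h x y₀)
  · exact ciInf_le_of_le (Finite.bddBelow_range _) x₀ (ciSup_le (h x₀))

theorem hausdorffCost_add_const (c : X → Y → ℝ) (K : ℝ) :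
    hausdorffCost (fun x y => c x y + K) = hausdorffCost c + K := by
  simp only [hausdorffCost, ← ciSup_add (Finite.bddAbove_range _),
    ← ciInf_add (Finite.bddBelow_range _), max_add_add_right]

theorem iSup_sub_iSup_le_iSup_iInf {f : X → ℝ} {g : Y → ℝ} {c : X → Y → ℝ}
    (h : ∀ x y, f x - g y ≤ c x y) : (⨆ x, f x) - ⨆ y, g y ≤ ⨆ x, ⨅ y, c x y := by
  obtain ⟨x, hx⟩ := exists_eq_ciSup_of_finite (f := f)
  obtain ⟨y, hy⟩ := exists_eq_ciInf_of_finite (f := c x)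
  calc
    (⨆ x, f x) - ⨆ y, g y ≤ f x - g y :=
      sub_le_sub hx.ge (le_ciSup (Finite.bddAbove_range g) y)
    _ ≤ c x y := h x y
    _ = ⨅ y, c x y := hy
    _ ≤ ⨆ x, ⨅ y, c x y := le_ciSup (f := fun x => ⨅ y, c x y) (Finite.bddAbove_range _) x

theorem iSup_sub_iSup_le_iInf_iSup {f : X → ℝ} {g : Y → ℝ} {c : X → Y → ℝ}
    (h : ∀ x y, g y - f x ≤ c x y) : (⨆ y, g y) - ⨆ x, f x ≤ ⨅ x, ⨆ y, c x y := by
  obtain ⟨y, hy⟩ := exists_eq_ciSup_of_finite (f := g)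
  refine le_ciInf fun x => ?_
  calc
    (⨆ y, g y) - ⨆ x, f x ≤ g y - f x :=
      sub_le_sub hy.ge (le_ciSup (Finite.bddAbove_range f) x)
    _ ≤ c x y := h x y
    _ ≤ ⨆ y, c x y := le_ciSup (Finite.bddAbove_range (c x)) y

theorem abs_iSup_sub_iSup_le_hausdorffCost {f : X → ℝ} {g : Y → ℝ} {c : X → Y → ℝ}
    (h : ∀ x y, |f x - g y| ≤ c x y) : |(⨆ x, f x) - ⨆ y, g y| ≤ hausdorffCost c := by
  refine abs_sub_le_iff.2 ⟨le_max_of_le_left ?_, le_max_of_le_right ?_⟩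
  · exact iSup_sub_iSup_le_iSup_iInf fun x y => (abs_sub_le_iff.1 (h x y)).1
  · exact iSup_sub_iSup_le_iInf_iSup fun x y => (abs_sub_le_iff.1 (h x y)).2

end Hausdorff

namespace FinMDP

theorem P_mem_stdSimplex (M : FinMDP S₁ A₁) (s : S₁) (a : A₁) : M.P s a ∈ stdSimplex ℝ S₁ :=
  ⟨M.P_nonneg s a, M.P_sum s a⟩

/-- The state-action value of the pair `(s, a)` when continuing with the value function `V`. -/
def actionValue (M : FinMDP S₁ A₁) (γ : ℝ) (V : S₁ → ℝ) (s : S₁) (a : A₁) : ℝ :=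
  M.R s a + γ * ∑ t, M.P s a t * V t

/-- The Bellman optimality operator, whose fixed points are the optimal value functions. -/
def bellman (M : FinMDP S₁ A₁) (γ : ℝ) (V : S₁ → ℝ) (s : S₁) : ℝ :=
  ⨆ a, M.actionValue γ V s a

end FinMDP

section GBSM

variable {M₁ : FinMDP S₁ A₁} {M₂ : FinMDP S₂ A₂} {γ : ℝ} {d : S₁ → S₂ → ℝ} {K : ℝ}
  {V₁ : S₁ → ℝ} {V₂ : S₂ → ℝ}

theorem abs_actionValue_sub_le_gbsmDelta (hγ : 0 ≤ γ) (h : ∀ s s', |V₁ s - V₂ s'| ≤ d s s')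
    (s : S₁) (a : A₁) (s' : S₂) (a' : A₂) :
    |M₁.actionValue γ V₁ s a - M₂.actionValue γ V₂ s' a'| ≤ gbsmDelta M₁ M₂ γ d s a s' a' := by
  have hW1 := abs_sub_le_W1 (M₁.P_mem_stdSimplex s a) (M₂.P_mem_stdSimplex s' a') h
  calc
    |M₁.actionValue γ V₁ s a - M₂.actionValue γ V₂ s' a'|
      = |(M₁.R s a - M₂.R s' a') +
          γ * (∑ t, M₁.P s a t * V₁ t - ∑ t, M₂.P s' a' t * V₂ t)| := by
        rw [FinMDP.actionValue, FinMDP.actionValue, add_sub_add_comm, mul_sub]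
    _ ≤ |M₁.R s a - M₂.R s' a'| +
          γ * |∑ t, M₁.P s a t * V₁ t - ∑ t, M₂.P s' a' t * V₂ t| := by
        exact (abs_add_le _ _).trans_eq (by rw [abs_mul, abs_of_nonneg hγ])
    _ ≤ gbsmDelta M₁ M₂ γ d s a s' a' := by
        unfold gbsmDelta
        gcongr

variable [Nonempty A₁] [Nonempty A₂]

theorem abs_bellman_sub_le_gbsmF (hγ : 0 ≤ γ) (h : ∀ s s', |V₁ s - V₂ s'| ≤ d s s')
    (s : S₁) (s' : S₂) : |M₁.bellman γ V₁ s - M₂.bellman γ V₂ s'| ≤ gbsmF M₁ M₂ γ d s s' :=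
  abs_iSup_sub_iSup_le_hausdorffCost fun a a' => abs_actionValue_sub_le_gbsmDelta hγ h s a s' a'

theorem gbsmF_add_const (M₁ : FinMDP S₁ A₁) (M₂ : FinMDP S₂ A₂) (γ : ℝ) (d : S₁ → S₂ → ℝ)
    (K : ℝ) (s : S₁) (s' : S₂) :
    gbsmF M₁ M₂ γ (fun t t' => d t t' + K) s s' = gbsmF M₁ M₂ γ d s s' + γ * K := by
  have hdelta : ∀ a a', gbsmDelta M₁ M₂ γ (fun t t' => d t t' + K) s a s' a' =
      gbsmDelta M₁ M₂ γ d s a s' a' + γ * K := fun a a' => by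
    rw [gbsmDelta, gbsmDelta, W1_add_const (M₁.P_mem_stdSimplex s a) (M₂.P_mem_stdSimplex s' a'),
      mul_add, add_assoc]
  simp only [gbsmF, hdelta]
  exact hausdorffCost_add_const _ _

theorem abs_sub_le_iterate_gbsmF_add (hγ : 0 ≤ γ) (hV₁ : ∀ s, V₁ s = M₁.bellman γ V₁ s)
    (hV₂ : ∀ s', V₂ s' = M₂.bellman γ V₂ s') (h : ∀ s s', |V₁ s - V₂ s'| ≤ d s s' + K) (n : ℕ)
    (s : S₁) (s' : S₂) : |V₁ s - V₂ s'| ≤ (gbsmF M₁ M₂ γ)^[n] d s s' + γ ^ n * K := by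
  induction n generalizing s s' with
  | zero => simpa using h s s'
  | succ n ih =>
    rw [hV₁ s, hV₂ s', Function.iterate_succ_apply', pow_succ', mul_assoc, ← gbsmF_add_const]
    exact abs_bellman_sub_le_gbsmF hγ ih s s'

theorem gbsmF_le {C : ℝ} (hγ : 0 ≤ γ) (hR : ∀ s a s' a', |M₁.R s a - M₂.R s' a'| ≤ C)
    (hd : ∀ s s', d s s' ≤ K) (s : S₁) (s' : S₂) : gbsmF M₁ M₂ γ d s s' ≤ C + γ * K :=
  hausdorffCost_le fun a a' => add_le_add (hR s a s' a') <| mul_le_mul_of_nonneg_left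
    (W1_le_of_forall_le (M₁.P_mem_stdSimplex s a) (M₂.P_mem_stdSimplex s' a') hd) hγ

theorem bddAbove_range_iterate_gbsmF (M₁ : FinMDP S₁ A₁) (M₂ : FinMDP S₂ A₂) (hγ0 : 0 ≤ γ)
    (hγ1 : γ < 1) (d : S₁ → S₂ → ℝ) (s : S₁) (s' : S₂) :
    BddAbove (Set.range fun n : ℕ => (gbsmF M₁ M₂ γ)^[n] d s s') := by
  obtain ⟨C, hC⟩ := Finite.exists_le fun p : (S₁ × A₁) × S₂ × A₂ =>
    |M₁.R p.1.1 p.1.2 - M₂.R p.2.1 p.2.2|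
  obtain ⟨D, hD⟩ := Finite.exists_le fun p : S₁ × S₂ => d p.1 p.2
  set K := max D (C / (1 - γ))
  have hK : C + γ * K ≤ K := by
    have : C ≤ K * (1 - γ) := (div_le_iff₀ (sub_pos.2 hγ1)).1 (le_max_right _ _)
    linarith
  have hiterate (n : ℕ) : ∀ t t', (gbsmF M₁ M₂ γ)^[n] d t t' ≤ K := by
    induction n with
    | zero => exact fun t t' => (hD (t, t')).trans (le_max_left _ _)
    | succ n ih =>
      rw [Function.iterate_succ_apply']
      exact fun t t' =>
        (gbsmF_le hγ0 (fun s a s' a' => hC ((s, a), s', a')) ih t t').trans hK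
  exact ⟨K, Set.forall_mem_range.2 fun n => hiterate n s s'⟩

theorem gbsm_optimal_value_bound_general
    (M₁ : FinMDP S₁ A₁) (M₂ : FinMDP S₂ A₂) (γ : ℝ) (hγ0 : 0 ≤ γ) (hγ1 : γ < 1)
    (V₁ : S₁ → ℝ) (V₂ : S₂ → ℝ)
    (hV₁ : ∀ s, V₁ s = ⨆ a : A₁, (M₁.R s a + γ * ∑ t, M₁.P s a t * V₁ t))
    (hV₂ : ∀ s', V₂ s' = ⨆ a : A₂, (M₂.R s' a + γ * ∑ t, M₂.P s' a t * V₂ t))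
    (s : S₁) (s' : S₂) : |V₁ s - V₂ s'| ≤ gbsm M₁ M₂ γ s s' := by
  obtain ⟨K, hK⟩ := Finite.exists_le fun p : S₁ × S₂ => |V₁ p.1 - V₂ p.2|
  have hbound (n : ℕ) : |V₁ s - V₂ s'| ≤ gbsm M₁ M₂ γ s s' + γ ^ n * K := by
    have hstart : ∀ t t', |V₁ t - V₂ t'| ≤ 0 + K := fun t t' => by simpa using hK (t, t')
    refine (abs_sub_le_iterate_gbsmF_add hγ0 hV₁ hV₂ hstart n s s').trans ?_
    gcongr
    exact le_ciSup (bddAbove_range_iterate_gbsmF M₁ M₂ hγ0 hγ1 _ s s') n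
  have hlim : Filter.Tendsto (fun n : ℕ => gbsm M₁ M₂ γ s s' + γ ^ n * K) Filter.atTop
      (nhds (gbsm M₁ M₂ γ s s')) := by
    simpa using ((tendsto_pow_atTop_nhds_zero_of_lt_one hγ0 hγ1).mul_const K).const_add
      (gbsm M₁ M₂ γ s s')
  exact ge_of_tendsto' hlim hbound

end GBSM

/-- the GBSM bounds the difference of optimal value functions. -/
theorem gbsm_optimal_value_bound
    [Nonempty S₁] [Nonempty A₁] [Nonempty S₂] [Nonempty A₂]
    (M₁ : FinMDP S₁ A₁) (M₂ : FinMDP S₂ A₂) (γ Rbar : ℝ)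
    (hγ0 : 0 ≤ γ) (hγ1 : γ < 1) (hRbar : 0 < Rbar)
    (hR₁ : ∀ s a, 0 ≤ M₁.R s a ∧ M₁.R s a ≤ Rbar)
    (hR₂ : ∀ s a, 0 ≤ M₂.R s a ∧ M₂.R s a ≤ Rbar)
    (V₁ : S₁ → ℝ) (V₂ : S₂ → ℝ)
    (hV₁ : ∀ s, V₁ s = ⨆ a : A₁, (M₁.R s a + γ * ∑ t, M₁.P s a t * V₁ t))
    (hV₂ : ∀ s', V₂ s' = ⨆ a : A₂, (M₂.R s' a + γ * ∑ t, M₂.P s' a t * V₂ t)) :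
    ∀ (s : S₁) (s' : S₂), |V₁ s - V₂ s'| ≤ gbsm M₁ M₂ γ s s' := by
  exact gbsm_optimal_value_bound_general M₁ M₂ γ hγ0 hγ1 V₁ V₂ hV₁ hV₂

end
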